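/- For all d, m ∈ ℕ with d ≥ m, there exists a constant C(m, d), depending only on m and d, such that for every n ∈ ℕ and every non-constant polynomial f ∈ 𝒫_{d,m}(ℝⁿ), one has σ(μ_{Qⁿ} ∘ f⁻¹, t) ≤ C(m, d) · [f]_∞^{−1/m} · t^{1/m} · (|ln([f]_∞^{−1} t)|^{d−m} + 1) for all t > 0. -/

import Mathlib

/-!
The estimate is proved by integrating out one variable at a time, by induction on the degree.

In one variable, let `p` have degree at most `m` and a coefficient `p_i` with `i ≥ 1` and
`|p_i| ≥ b`. Lagrange interpolation at separated points gives
`|{x : |p x| ≤ s}| ≤ C (s / b) ^ (1 / m)` (`sublevel_one_dim`). The same estimate for `p'`, together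
with integration by parts on the boundedly many intervals where `|p'| ≥ s` and `p''` has constant
sign, gives `∫ φ'(p) ≤ C (t / b) ^ (1 / m)` when `|φ| ≤ t` and `|φ'| ≤ 1` (`good_deriv`). Hence
`φ'` and the indicator of `[-t, t]` are both "good" test functions `w` in the sense of `Good`, and
only this property enters the rest of the argument.

In several variables, let `f` have degree `D` and pick a monomial `x^j` of degree `D` with
coefficient of absolute value at least `A`. If `j₀ = 0`, freezing `x₀` keeps this coefficient. If
`j₀ ≥ 1`, then the coefficient `g` of `x₀ ^ j₀` is a polynomial of degree `D - j₀` in the other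
variables for which the same number is a top-degree coefficient, and the one-variable bound gives
`∫ w(f) ≤ ∫ min(1, C (t / |g|) ^ (1 / m))`. By induction `g` satisfies the sublevel estimate, and
the layer-cake formula (`step_integral`) bounds the right-hand side. If the degree `D - j₀` of `g`
is at least `m`, one logarithm is gained, which is affordable since `j₀ ≥ 1`; if it is smaller than
`m`, then the sublevel estimate has exponent `1 / (D - j₀) > 1 / m` and the integral produces no
logarithm at all. The number of variables never enters the constants (`cubeBound_exists`).
-/

open MeasureTheory

noncomputable section

/-- The class `C_b^∞(ℝ)` of bounded smooth functions on `ℝ`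
with bounded derivatives of every order. -/
def CbSmooth (φ : ℝ → ℝ) : Prop :=
  ContDiff ℝ (⊤ : ℕ∞) φ ∧ ∀ k : ℕ, ∃ M : ℝ, ∀ t : ℝ, |iteratedDeriv k φ t| ≤ M

/-- The modulus `σ(ν, ε)` of a Borel measure `ν` on `ℝ`. -/
def sigmaMod (ν : Measure ℝ) (ε : ℝ) : ℝ :=
  sSup {y : ℝ | ∃ φ : ℝ → ℝ, CbSmooth φ ∧ (∀ t, |φ t| ≤ ε) ∧ (∀ t, |deriv φ t| ≤ 1) ∧
    y = ∫ t, deriv φ t ∂ν}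

/-- `[f]_∞`: the largest absolute value of a coefficient of the leading
(top-degree) part of `f`. -/
def leadingSup {n : ℕ} (f : MvPolynomial (Fin n) ℝ) : ℝ :=
  sSup {y : ℝ | ∃ u ∈ f.support, (u.sum fun _ e => e) = f.totalDegree ∧ y = |f.coeff u|}

/-- The unit cube `Qⁿ = [-1/2, 1/2]ⁿ`. -/
def unitCube (n : ℕ) : Set (Fin n → ℝ) :=
  Set.Icc (fun _ => -(1 / 2 : ℝ)) fun _ => (1 / 2 : ℝ)

/-- The uniform probability measure `μ_{Qⁿ}` on the unit cube. -/
def cubeMeasure (n : ℕ) : Measure (Fin n → ℝ) := volume.restrict (unitCube n)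

/-! ### Sublevel sets of polynomials in one variable -/

open Polynomial in
lemma abs_coeff_prod_le (δ : ℝ) (hδ : 0 < δ) (c y : ℝ → ℝ) (T : Finset ℝ)
    (hc : ∀ j ∈ T, |c j| ≤ 1 / δ) (hy : ∀ j ∈ T, |y j| ≤ 1) (n : ℕ) :
    |(∏ j ∈ T, (C (c j) * (X - C (y j)) : ℝ[X])).coeff n| ≤ (2 / δ) ^ T.card := by
  classical
  induction T using Finset.induction_on generalizing n with
  | empty =>
    simp only [Finset.prod_empty, Finset.card_empty, pow_zero, coeff_one]
    split_ifs <;> simp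
  | insert a T ha ih =>
    have ih' := ih (fun j hj => hc j (Finset.mem_insert_of_mem hj))
      (fun j hj => hy j (Finset.mem_insert_of_mem hj))
    have hca := hc a (Finset.mem_insert_self _ _)
    have hya := hy a (Finset.mem_insert_self _ _)
    rw [Finset.prod_insert ha, Finset.card_insert_of_notMem ha]
    set P := ∏ j ∈ T, (C (c j) * (X - C (y j)) : ℝ[X]) with hP
    have hB : (0 : ℝ) ≤ (2 / δ) ^ T.card := by positivity
    have key : ∀ u : ℝ, |u| ≤ (2 / δ) ^ T.card →
        |c a * (u - y a * P.coeff n)| ≤ (2 / δ) ^ (T.card + 1) := by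
      intro u hu
      have h1 : |y a * P.coeff n| ≤ 1 * (2 / δ) ^ T.card := by
        rw [abs_mul]; exact mul_le_mul hya (ih' n) (abs_nonneg _) zero_le_one
      have h2 : |u - y a * P.coeff n| ≤ 2 * (2 / δ) ^ T.card := by
        have := abs_sub u (y a * P.coeff n); linarith
      rw [abs_mul]
      calc |c a| * |u - y a * P.coeff n| ≤ (1 / δ) * (2 * (2 / δ) ^ T.card) :=
            mul_le_mul hca h2 (abs_nonneg _) (by positivity)
        _ = _ := by rw [pow_succ]; ring
    rw [mul_assoc, coeff_C_mul, sub_mul, coeff_sub, coeff_C_mul]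
    cases n with
    | zero => rw [coeff_X_mul_zero]; exact key 0 (by simpa using hB)
    | succ n => rw [coeff_X_mul]; exact key _ (ih' n)

/-- A set of measure larger than `2δN` contains `N + 1` points that are pairwise `δ`-separated. -/
lemma exists_separated (E : Set ℝ) (δ : ℝ) (hδ : 0 < δ) (N : ℕ)
    (h : ENNReal.ofReal (2 * δ) * N < volume E) :
    ∃ s : Finset ℝ, s.card = N + 1 ∧ ↑s ⊆ E ∧ ∀ x ∈ s, ∀ y ∈ s, x ≠ y → δ ≤ |x - y| := by
  classical
  induction N with
  | zero =>
    have : E.Nonempty := by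
      rw [Set.nonempty_iff_ne_empty]; rintro rfl; simp at h
    obtain ⟨x, hx⟩ := this
    exact ⟨{x}, by simp, by simpa using hx, by simp +contextual⟩
  | succ N ih =>
    obtain ⟨s, hs, hsE, hsep⟩ := ih (lt_of_le_of_lt (by gcongr; simp) h)
    have : ∃ x ∈ E, ∀ y ∈ s, δ ≤ |x - y| := by
      by_contra! hcon
      have hsub : E ⊆ ⋃ y ∈ s, Metric.ball y δ := by
        intro x hx
        obtain ⟨y, hy, hxy⟩ := hcon x hx
        simp only [Set.mem_iUnion]
        exact ⟨y, hy, by simpa [Real.dist_eq] using hxy⟩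
      have h1 : volume E ≤ ∑ y ∈ s, volume (Metric.ball y δ) :=
        (measure_mono hsub).trans (measure_biUnion_finset_le _ _)
      simp only [Real.volume_ball, Finset.sum_const, hs, nsmul_eq_mul] at h1
      rw [mul_comm] at h1
      exact absurd h (not_lt.mpr h1)
    obtain ⟨x, hx, hxs⟩ := this
    have hxn : x ∉ s := by
      intro hxs'; have := hxs x hxs'; simp at this; linarith
    refine ⟨insert x s, by rw [Finset.card_insert_of_notMem hxn, hs], ?_, ?_⟩
    · intro z hz
      rcases Finset.mem_insert.mp (Finset.mem_coe.mp hz) with rfl | hz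
      · exact hx
      · exact hsE hz
    · intro a ha b hb hab
      rcases Finset.mem_insert.mp ha with rfl | ha' <;> rcases Finset.mem_insert.mp hb with rfl | hb'
      · exact absurd rfl hab
      · exact hxs b hb'
      · rw [abs_sub_comm]; exact hxs a ha'
      · exact hsep a ha' b hb' hab

open Polynomial in
/-- One-dimensional sublevel estimate: Lagrange interpolation at `k + 1` separated points of the
sublevel set bounds every coefficient of the polynomial. -/
lemma sublevel_one_dim (k : ℕ) (hk : 0 < k) (p : ℝ[X]) (hp : p.natDegree ≤ k) (i : ℕ) (b s : ℝ)
    (hb : 0 < b) (hs : 0 < s) (hpi : b ≤ |p.coeff i|) :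
    volume.real {x ∈ Set.Icc (-(1 / 2 : ℝ)) (1 / 2) | |p.eval x| ≤ s} ≤
      16 * k * (s / b) ^ (1 / (k : ℝ)) := by
  classical
  set E := {x ∈ Set.Icc (-(1 / 2 : ℝ)) (1 / 2) | |p.eval x| ≤ s} with hE
  set l := volume.real E with hl
  have hk' : (0 : ℝ) < k := by exact_mod_cast hk
  have hEfin : volume E ≠ ⊤ :=
    ne_top_of_le_ne_top (by simp) (measure_mono (Set.sep_subset _ _) :
      volume E ≤ volume (Set.Icc (-(1 / 2 : ℝ)) (1 / 2)))
  rcases (measureReal_nonneg : 0 ≤ l).eq_or_lt with h0 | hpos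
  · rw [show l = 0 from h0.symm]; positivity
  set δ := l / (4 * k) with hδ
  have hδp : 0 < δ := by positivity
  have hvol : ENNReal.ofReal (2 * δ) * k < volume E := by
    rw [← ENNReal.ofReal_toReal hEfin, ← ENNReal.ofReal_natCast, ← ENNReal.ofReal_mul (by positivity)]
    refine (ENNReal.ofReal_lt_ofReal_iff hpos).mpr ?_
    change 2 * δ * k < l
    rw [hδ]; field_simp; linarith
  obtain ⟨S, hcard, hSE, hsep⟩ := exists_separated E δ hδp k hvol
  have hfInt : p = Lagrange.interpolate S id fun x => p.eval (id x) := by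
    refine Lagrange.eq_interpolate (Set.injOn_id _) ?_
    rw [hcard]
    exact lt_of_le_of_lt (degree_le_of_natDegree_le hp) (by exact_mod_cast Nat.lt_succ_self k)
  have hbound : b ≤ (k + 1) * (s * (2 / δ) ^ k) := by
    refine hpi.trans ?_
    rw [hfInt, Lagrange.interpolate_apply, finsetSum_coeff]
    refine (Finset.abs_sum_le_sum_abs _ _).trans ?_
    have : ∀ x ∈ S, |(C (p.eval (id x)) * Lagrange.basis S id x).coeff i| ≤ s * (2 / δ) ^ k := by
      intro x hx
      rw [coeff_C_mul, abs_mul]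
      refine mul_le_mul (hSE hx).2 ?_ (abs_nonneg _) hs.le
      unfold Lagrange.basis Lagrange.basisDivisor
      have := abs_coeff_prod_le δ hδp (fun j => (x - j)⁻¹) id (S.erase x) ?_ ?_ i
      · rw [Finset.card_erase_of_mem hx, hcard] at this
        simpa using this
      · intro j hj
        rw [abs_inv, one_div]
        exact inv_anti₀ hδp (hsep x hx j (Finset.mem_of_mem_erase hj) (Finset.ne_of_mem_erase hj).symm)
      · intro j hj
        have := (hSE (Finset.mem_of_mem_erase hj)).1
        simp only [id, abs_le]
        constructor <;> linarith [this.1, this.2]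
    refine (Finset.sum_le_sum this).trans ?_
    rw [Finset.sum_const, hcard]; simp
  have h2 : ((k : ℝ) + 1) ≤ 2 ^ k := by
    exact_mod_cast Nat.succ_le_of_lt (Nat.lt_two_pow_self (n := k))
  have h3 : (δ / 4) ^ k ≤ s / b := by
    have h4 : b ≤ 2 ^ k * (s * (2 / δ) ^ k) := hbound.trans (by gcongr)
    rw [le_div_iff₀ hb]
    calc (δ / 4) ^ k * b ≤ (δ / 4) ^ k * (2 ^ k * (s * (2 / δ) ^ k)) := by gcongr
      _ = (δ / 4 * 2 * (2 / δ)) ^ k * s := by rw [mul_pow, mul_pow]; ring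
      _ = s := by
        have : δ / 4 * 2 * (2 / δ) = 1 := by field_simp; norm_num
        rw [this, one_pow, one_mul]
  have h5 : δ / 4 ≤ (s / b) ^ (1 / (k : ℝ)) := by
    have := Real.rpow_le_rpow (by positivity) h3 (by positivity : 0 ≤ 1 / (k : ℝ))
    rwa [one_div, Real.pow_rpow_inv_natCast (by positivity) hk.ne', ← one_div] at this
  have h6 : l = 16 * k * (δ / 4) := by rw [hδ]; field_simp; norm_num
  rw [h6]; gcongr

/-! ### Oscillatory averages in one variable -/

open Polynomial in
/-- Integration by parts on an interval where `p'` is bounded away from zero and monotone; the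
integral is compared with the increment of `(φ(p) ∓ t) / p'`. -/
lemma osc_base (φ : ℝ → ℝ) (hφ : ContDiff ℝ 1 φ) (t s : ℝ) (hs : 0 < s) (ht : ∀ y, |φ y| ≤ t)
    (p : ℝ[X]) (a c : ℝ) (hac : a ≤ c) (hq : ∀ x ∈ Set.Icc a c, s ≤ |(derivative p).eval x|)
    (hsgn : (∀ x ∈ Set.Icc a c, 0 ≤ (derivative (derivative p)).eval x) ∨
      ∀ x ∈ Set.Icc a c, (derivative (derivative p)).eval x ≤ 0) :
    ∫ x in a..c, deriv φ (p.eval x) ≤ 4 * t / s := by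
  set q := derivative p with hqdef
  obtain ⟨e, he1, he⟩ : ∃ e : ℝ, |e| = 1 ∧ ∀ x ∈ Set.Icc a c,
      e * (derivative q).eval x = |(derivative q).eval x| := by
    rcases hsgn with h | h
    · exact ⟨1, by simp, fun x hx => by rw [abs_of_nonneg (h x hx), one_mul]⟩
    · exact ⟨-1, by simp, fun x hx => by rw [abs_of_nonpos (h x hx)]; ring⟩
  have hne : ∀ x ∈ Set.Icc a c, q.eval x ≠ 0 := by
    intro x hx h0
    have := hq x hx; rw [h0, abs_zero] at this; linarith
  have ht0 : 0 ≤ t := (abs_nonneg _).trans (ht 0)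
  set v : ℝ → ℝ := fun x => (φ (p.eval x) - e * t) / q.eval x with hv
  have hderiv : ∀ x ∈ Set.Icc a c, HasDerivAt v
      ((deriv φ (p.eval x) * q.eval x * q.eval x - (φ (p.eval x) - e * t) * (derivative q).eval x) /
        (q.eval x) ^ 2) x := by
    intro x hx
    have h1 : HasDerivAt (fun x => φ (p.eval x)) (deriv φ (p.eval x) * q.eval x) x :=
      ((hφ.differentiable (by norm_num)) _).hasDerivAt.comp x (p.hasDerivAt x)
    exact (h1.sub_const _).div (q.hasDerivAt x) (hne x hx)
  have hcont : Continuous (deriv φ) := hφ.continuous_deriv (by norm_num)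
  have hmain := intervalIntegral.integral_le_sub_of_hasDeriv_right_of_le
    (φ := fun x => deriv φ (p.eval x)) hac
    (fun x hx => (hderiv x hx).continuousAt.continuousWithinAt)
    (fun x hx => (hderiv x (Set.Ioo_subset_Icc_self hx)).hasDerivWithinAt)
    ((hcont.comp p.continuous).continuousOn.integrableOn_compact isCompact_Icc)
    (by
      intro x hx
      have hx' := Set.Ioo_subset_Icc_self hx
      have hq0 := hne x hx'
      have hq2 : 0 < (q.eval x) ^ 2 := by positivity
      rw [le_div_iff₀ hq2]
      have h1 : φ (p.eval x) * (derivative q).eval x ≤ t * |(derivative q).eval x| := by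
        refine (le_abs_self _).trans ?_
        rw [abs_mul]; exact mul_le_mul_of_nonneg_right (ht _) (abs_nonneg _)
      rw [← he x hx'] at h1
      nlinarith [h1])
  have hb : ∀ x ∈ Set.Icc a c, |v x| ≤ 2 * t / s := by
    intro x hx
    simp only [hv, abs_div]
    have h1 : |φ (p.eval x) - e * t| ≤ 2 * t := by
      have := abs_sub (φ (p.eval x)) (e * t)
      rw [abs_mul, he1, abs_of_nonneg ht0] at this
      linarith [ht (p.eval x)]
    exact div_le_div₀ (by positivity) h1 hs (hq x hx)
  have h1 := hb a (Set.left_mem_Icc.mpr hac)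
  have h2 := hb c (Set.right_mem_Icc.mpr hac)
  have h3 : 4 * t / s = 2 * t / s + 2 * t / s := by ring
  rw [abs_le] at h1 h2
  linarith [h1.1, h2.2]

lemma const_sign_of_no_zero (f : ℝ → ℝ) (hf : Continuous f) (a c : ℝ)
    (h : ∀ x ∈ Set.Ioo a c, f x ≠ 0) :
    (∀ x ∈ Set.Icc a c, 0 ≤ f x) ∨ ∀ x ∈ Set.Icc a c, f x ≤ 0 := by
  by_contra! hcon
  obtain ⟨⟨x, hx, hfx⟩, y, hy, hfy⟩ := hcon
  rcases lt_trichotomy x y with hxy | rfl | hxy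
  · obtain ⟨z, hz, hz0⟩ := intermediate_value_Ioo hxy.le hf.continuousOn ⟨hfx, hfy⟩
    exact h z ⟨hx.1.trans_lt hz.1, hz.2.trans_le hy.2⟩ hz0
  · linarith
  · obtain ⟨z, hz, hz0⟩ := intermediate_value_Ioo' hxy.le hf.continuousOn ⟨hfx, hfy⟩
    exact h z ⟨hy.1.trans_lt hz.1, hz.2.trans_le hx.2⟩ hz0

open Polynomial in
/-- Cutting `[a, c]` at the zeros of `(p'² - s²) p''` leaves pieces on which either `|p'| ≤ s` or
`osc_base` applies. -/
lemma osc_split (φ : ℝ → ℝ) (hφ : ContDiff ℝ 1 φ) (t s : ℝ) (hs : 0 < s) (ht : ∀ y, |φ y| ≤ t)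
    (hφ1 : ∀ y, |deriv φ y| ≤ 1) (p R : ℝ[X])
    (hR : R = ((derivative p) ^ 2 - C (s ^ 2)) * derivative (derivative p)) (hR0 : R ≠ 0)
    (N : ℕ) (a c : ℝ) (hac : a ≤ c)
    (hN : (R.roots.toFinset.filter fun x => a < x ∧ x < c).card = N) :
    ∫ x in a..c, deriv φ (p.eval x) ≤
      (∫ x in a..c, {x | |(derivative p).eval x| ≤ s}.indicator (fun _ => (1 : ℝ)) x) +
        (N + 1) * (4 * t / s) := by
  classical
  have ht0 : 0 ≤ t := (abs_nonneg _).trans (ht 0)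
  have hcont : Continuous fun x => deriv φ (p.eval x) :=
    (hφ.continuous_deriv (by norm_num)).comp p.continuous
  have hmeas : MeasurableSet {x | |(derivative p).eval x| ≤ s} :=
    (isClosed_le (derivative p).continuous.abs continuous_const).measurableSet
  have hII : ∀ a c : ℝ, IntervalIntegrable
      ({x | |(derivative p).eval x| ≤ s}.indicator (fun _ => (1 : ℝ))) volume a c := by
    intro a c
    rw [intervalIntegrable_iff]
    exact (intervalIntegrable_iff.mp (intervalIntegrable_const (c := (1 : ℝ)))).indicator hmeas
  induction N using Nat.strong_induction_on generalizing a c with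
  | _ N ih =>
    set F := R.roots.toFinset.filter fun x => a < x ∧ x < c with hF
    rcases F.eq_empty_or_nonempty with h0 | ⟨z, hz⟩
    · have hno : ∀ x ∈ Set.Ioo a c, R.eval x ≠ 0 := by
        intro x hx hx0
        have : x ∈ F := by simp [hF, hR0, hx0, hx.1, hx.2]
        rw [h0] at this; simp at this
      have hfac : ∀ x, R.eval x =
          (((derivative p).eval x) ^ 2 - s ^ 2) * (derivative (derivative p)).eval x := by
        intro x; rw [hR]; simp
      have h1 := const_sign_of_no_zero (fun x => ((derivative p).eval x) ^ 2 - s ^ 2)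
        (((derivative p).continuous.pow 2).sub continuous_const) a c
        (fun x hx h => hno x hx (by rw [hfac, h, zero_mul]))
      have h2 := const_sign_of_no_zero (fun x => (derivative (derivative p)).eval x)
        (derivative (derivative p)).continuous a c
        (fun x hx h => hno x hx (by rw [hfac, h, mul_zero]))
      have hpos : (4 * t / s) ≤ (N + 1) * (4 * t / s) := by
        have : 0 ≤ (N : ℝ) * (4 * t / s) := by positivity
        linarith
      rcases h1 with h1 | h1
      · have hb := osc_base φ hφ t s hs ht p a c hac
          (fun x hx => by
            have := h1 x hx
            exact (le_abs_self s).trans (sq_le_sq.mp (by linarith))) h2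
        have : 0 ≤ ∫ x in a..c, {x | |(derivative p).eval x| ≤ s}.indicator (fun _ => (1 : ℝ)) x :=
          intervalIntegral.integral_nonneg hac
            fun x _ => Set.indicator_nonneg (fun _ _ => zero_le_one) x
        linarith
      · have : ∫ x in a..c, deriv φ (p.eval x) ≤
            ∫ x in a..c, {x | |(derivative p).eval x| ≤ s}.indicator (fun _ => (1 : ℝ)) x := by
          refine intervalIntegral.integral_mono_on hac (hcont.intervalIntegrable _ _) (hII a c) ?_
          intro x hx
          have hx1 : |(derivative p).eval x| ≤ s :=
            abs_le_of_sq_le_sq (by have := h1 x hx; linarith) hs.le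
          rw [Set.indicator_of_mem (by exact hx1)]
          exact (le_abs_self _).trans (hφ1 _)
        have : 0 ≤ (4 * t / s) := by positivity
        linarith
    · have hz' : a < z ∧ z < c := (Finset.mem_filter.mp hz).2
      set F1 := R.roots.toFinset.filter fun x => a < x ∧ x < z with hF1
      set F2 := R.roots.toFinset.filter fun x => z < x ∧ x < c with hF2
      have hcard : F1.card + F2.card + 1 ≤ N := by
        have hd : Disjoint F1 F2 := by
          rw [Finset.disjoint_left]
          intro x hx1 hx2
          have := (Finset.mem_filter.mp hx1).2
          have := (Finset.mem_filter.mp hx2).2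
          linarith
        have hzn : z ∉ F1 ∪ F2 := by simp [hF1, hF2]
        rw [← Finset.card_union_of_disjoint hd, ← Finset.card_insert_of_notMem hzn, ← hN]
        refine Finset.card_le_card ?_
        intro x hx
        rcases Finset.mem_insert.mp hx with rfl | hx
        · exact hz
        rcases Finset.mem_union.mp hx with hx | hx
        · have h := Finset.mem_filter.mp hx
          exact Finset.mem_filter.mpr ⟨h.1, h.2.1, h.2.2.trans hz'.2⟩
        · have h := Finset.mem_filter.mp hx
          exact Finset.mem_filter.mpr ⟨h.1, hz'.1.trans h.2.1, h.2.2⟩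
      have i1 := ih F1.card (by omega) a z hz'.1.le rfl
      have i2 := ih F2.card (by omega) z c hz'.2.le rfl
      rw [← intervalIntegral.integral_add_adjacent_intervals (hcont.intervalIntegrable a z)
        (hcont.intervalIntegrable z c), ← intervalIntegral.integral_add_adjacent_intervals
        (hII a z) (hII z c)]
      have hc' : ((F1.card : ℝ) + F2.card + 1) ≤ N := by exact_mod_cast hcard
      have h4 : 0 ≤ (4 * t / s) := by positivity
      nlinarith

/-! ### Admissible test functions -/

/-- The uniform measure on the one-dimensional cube. -/
def segMeasure : Measure ℝ := volume.restrict (Set.Icc (-(1 / 2 : ℝ)) (1 / 2))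

instance : IsProbabilityMeasure segMeasure := ⟨by simp [segMeasure]; norm_num⟩

open Polynomial in
/-- `Good m K t w`: the test function `w` is bounded by one and, at scale `t`, its averages along
one-variable polynomials of degree at most `m` decay like `(t / b) ^ (1 / m)`, where `b` is a lower
bound for any one non-constant coefficient. -/
structure Good (m : ℕ) (K t : ℝ) (w : ℝ → ℝ) : Prop where
  meas : Measurable w
  bound : ∀ y, |w y| ≤ 1
  decay : ∀ p : ℝ[X], p.natDegree ≤ m → ∀ i, 0 < i → ∀ b, 0 < b → b ≤ |p.coeff i| →
    ∫ x, w (p.eval x) ∂segMeasure ≤ K * (t / b) ^ (1 / (m : ℝ))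

lemma Good.mono {m : ℕ} {K K' t : ℝ} {w : ℝ → ℝ} (ht : 0 < t) (h : Good m K t w) (hK : K ≤ K') :
    Good m K' t w :=
  ⟨h.meas, h.bound, fun p hp i hi b hb hbi => (h.decay p hp i hi b hb hbi).trans (by gcongr)⟩

lemma good_indicator (m : ℕ) (hm : 0 < m) (s : ℝ) (hs : 0 < s) :
    Good m (16 * m) s ({y | |y| ≤ s}.indicator fun _ => 1) := by
  have hms : MeasurableSet {y : ℝ | |y| ≤ s} := (isClosed_le continuous_abs continuous_const).measurableSet
  refine ⟨measurable_const.indicator hms, ?_, ?_⟩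
  · intro y
    by_cases hy : y ∈ {y : ℝ | |y| ≤ s}
    · rw [Set.indicator_of_mem hy]; simp
    · rw [Set.indicator_of_notMem hy]; simp
  · intro p hp i _ b hb hbi
    refine le_trans (le_of_eq ?_) (sublevel_one_dim m hm p hp i b s hb hs hbi)
    have hm2 : MeasurableSet ((fun x => p.eval x) ⁻¹' {y : ℝ | |y| ≤ s}) := p.continuous.measurable hms
    have : ∀ x, ({y : ℝ | |y| ≤ s}.indicator (fun _ => (1 : ℝ))) (p.eval x) =
        ((fun x => p.eval x) ⁻¹' {y : ℝ | |y| ≤ s}).indicator (fun _ => (1 : ℝ)) x := fun x => rfl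
    simp_rw [this]
    rw [integral_indicator_const _ hm2, segMeasure, measureReal_restrict_apply hm2, Set.inter_comm,
      smul_eq_mul, mul_one]
    rfl

open Polynomial in
lemma good_deriv (m : ℕ) (hm : 0 < m) (φ : ℝ → ℝ) (hφ : ContDiff ℝ 1 φ) (t : ℝ) (htp : 0 < t)
    (ht : ∀ y, |φ y| ≤ t) (hφ1 : ∀ y, |deriv φ y| ≤ 1) :
    Good m (16 * m + 4 * (3 * m + 1)) t (deriv φ) := by
  have hm' : (1 : ℝ) ≤ m := by exact_mod_cast hm
  refine ⟨(hφ.continuous_deriv (by norm_num)).measurable, hφ1, ?_⟩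
  intro p hp i hi b hb hbi
  have hcont : Continuous fun x => deriv φ (p.eval x) :=
    (hφ.continuous_deriv (by norm_num)).comp p.continuous
  -- For `t ≥ b` the trivial bound `∫ φ'(p) ≤ 1` suffices.
  rcases le_or_gt b t with htb | htb
  · have h1 : 1 ≤ (t / b) ^ (1 / (m : ℝ)) :=
      Real.one_le_rpow ((one_le_div hb).mpr htb) (by positivity)
    have h2 : ∫ x, deriv φ (p.eval x) ∂segMeasure ≤ 1 := by
      refine (integral_mono_of_nonneg (f := fun x => |deriv φ (p.eval x)|)
        (g := fun _ => (1 : ℝ)) ?_ (integrable_const _) ?_ |> fun h =>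
        ((le_abs_self _).trans (abs_integral_le_integral_abs)).trans h).trans (by simp)
      · exact Filter.Eventually.of_forall fun x => abs_nonneg _
      · exact Filter.Eventually.of_forall fun x => hφ1 _
    nlinarith
  set r := (t / b) ^ (1 / (m : ℝ)) with hr
  have hrpos : 0 < r := by positivity
  have hr1 : r ≤ 1 := Real.rpow_le_one (by positivity) ((div_le_one hb).mpr htb.le) (by positivity)
  have hrm : r ^ m = t / b := by
    rw [hr, one_div]; exact Real.rpow_inv_natCast_pow (by positivity) hm.ne'
  set q := derivative p with hq
  have hqdeg : q.natDegree ≤ m - 1 := (natDegree_derivative_le p).trans (by omega)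
  have hqi : b ≤ |q.coeff (i - 1)| := by
    rw [hq, coeff_derivative, Nat.sub_add_cancel hi, abs_mul]
    have h1 : (1 : ℝ) ≤ |((i - 1 : ℕ) : ℝ) + 1| := by
      rw [abs_of_nonneg (by positivity)]; linarith [(i - 1).cast_nonneg (α := ℝ)]
    nlinarith [abs_nonneg (p.coeff i)]
  have hconv : ∫ x, deriv φ (p.eval x) ∂segMeasure =
      ∫ x in (-(1 / 2 : ℝ))..(1 / 2), deriv φ (p.eval x) := by
    rw [segMeasure, integral_Icc_eq_integral_Ioc, intervalIntegral.integral_of_le (by norm_num)]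
  rw [hconv]
  -- The threshold `s` balances `t / s` against `(s / b) ^ (1 / (m - 1))`.
  set s := b * r ^ (m - 1) with hs
  have hspos : 0 < s := by positivity
  have hsb : s ≤ b := by
    have : r ^ (m - 1) ≤ 1 := pow_le_one₀ hrpos.le hr1
    nlinarith
  have hts : t / s = r := by
    rw [div_eq_iff hspos.ne', hs]
    have : r * (b * r ^ (m - 1)) = b * r ^ m := by
      rw [← mul_pow_sub_one hm.ne' r]; ring
    rw [this, hrm]; field_simp
  have h4ts : 4 * t / s = 4 * r := by rw [mul_div_assoc, hts]
  -- For constant `p'` the cutting polynomial `(p'² - s²) p''` vanishes, but `|p'| ≥ b ≥ s`.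
  by_cases hq' : derivative q = 0
  · have hqc := derivative_eq_zero.mp hq'
    rw [natDegree_eq_zero] at hqc
    obtain ⟨c, hc⟩ := hqc
    have hcb : b ≤ |c| := by
      rw [← hc, coeff_C] at hqi
      split_ifs at hqi
      · exact hqi
      · simp at hqi; linarith
    have := osc_base φ hφ t s hspos ht p (-(1 / 2)) (1 / 2) (by norm_num)
      (fun x _ => by rw [← hq, ← hc, eval_C]; exact hsb.trans hcb)
      (Or.inl fun x _ => by rw [← hq, hq']; simp)
    rw [h4ts] at this
    nlinarith
  · have hqd : 0 < q.natDegree := by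
      rw [Nat.pos_iff_ne_zero]
      intro h0
      exact hq' (derivative_of_natDegree_zero h0)
    have hm2 : 0 < m - 1 := by omega
    set R := (q ^ 2 - C (s ^ 2)) * derivative q with hR
    have hq2 : q ^ 2 - C (s ^ 2) ≠ 0 := by
      intro h
      rw [sub_eq_zero] at h
      have := congrArg natDegree h
      rw [natDegree_pow, natDegree_C] at this
      omega
    have hR0 : R ≠ 0 := mul_ne_zero hq2 hq'
    have hRdeg : R.natDegree ≤ 3 * m := by
      refine natDegree_mul_le.trans ?_
      have h1 : (q ^ 2 - C (s ^ 2)).natDegree ≤ 2 * (m - 1) := by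
        rw [natDegree_sub_C, natDegree_pow]; omega
      have h2 : (derivative q).natDegree ≤ m - 1 := (natDegree_derivative_le q).trans (by omega)
      omega
    have hsplit := osc_split φ hφ t s hspos ht hφ1 p R hR hR0 _ (-(1 / 2)) (1 / 2) (by norm_num) rfl
    set N := (R.roots.toFinset.filter fun x => (-(1 / 2) : ℝ) < x ∧ x < 1 / 2).card with hN
    have hN3 : (N : ℝ) ≤ 3 * m := by
      have : N ≤ 3 * m := (Finset.card_filter_le _ _).trans
        ((Multiset.toFinset_card_le _).trans ((card_roots' R).trans hRdeg))
      exact_mod_cast this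
    have hind : (∫ x in (-(1 / 2) : ℝ)..(1 / 2),
        {x | |q.eval x| ≤ s}.indicator (fun _ => (1 : ℝ)) x) ≤ 16 * m * r := by
      have hmeas : MeasurableSet {x | |q.eval x| ≤ s} :=
        (isClosed_le q.continuous.abs continuous_const).measurableSet
      rw [intervalIntegral.integral_of_le (by norm_num), ← integral_Icc_eq_integral_Ioc,
        integral_indicator_const _ hmeas, measureReal_restrict_apply hmeas, Set.inter_comm,
        smul_eq_mul, mul_one]
      refine (sublevel_one_dim (m - 1) hm2 q hqdeg (i - 1) b s hb hspos hqi).trans ?_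
      have hsr : (s / b) ^ (1 / ((m - 1 : ℕ) : ℝ)) = r := by
        rw [hs, mul_div_cancel_left₀ _ hb.ne', one_div]
        exact Real.pow_rpow_inv_natCast hrpos.le hm2.ne'
      rw [hsr]
      have : ((m - 1 : ℕ) : ℝ) ≤ m := by exact_mod_cast Nat.sub_le m 1
      gcongr
    rw [h4ts] at hsplit
    nlinarith

/-! ### Fubini on the cube -/

lemma cubeMeasure_eq_pi (n : ℕ) : cubeMeasure n = Measure.pi fun _ : Fin n => segMeasure := by
  unfold cubeMeasure unitCube segMeasure
  rw [← Set.pi_univ_Icc, volume_pi, Measure.restrict_pi_pi]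

instance (n : ℕ) : IsProbabilityMeasure (cubeMeasure n) := by
  rw [cubeMeasure_eq_pi]; infer_instance

/-- Fubini on the cube, in both orders, splitting off the coordinate of index `0`. -/
lemma cube_fubini (n : ℕ) (F : (Fin (n + 1) → ℝ) → ℝ) (hF : Measurable F) (hb : ∀ x, |F x| ≤ 1) :
    (∫ x, F x ∂cubeMeasure (n + 1) =
      ∫ y, ∫ z, F (Fin.cons y z) ∂cubeMeasure n ∂segMeasure) ∧
    (∫ x, F x ∂cubeMeasure (n + 1) =
      ∫ z, ∫ y, F (Fin.cons y z) ∂segMeasure ∂cubeMeasure n) ∧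
    Measurable fun z : Fin n → ℝ => ∫ y, F (Fin.cons y z) ∂segMeasure := by
  have hmp := (measurePreserving_piFinSuccAbove (fun _ : Fin (n + 1) => segMeasure) 0).symm
  rw [← cubeMeasure_eq_pi, ← cubeMeasure_eq_pi] at hmp
  have hG : Measurable fun p : ℝ × (Fin n → ℝ) => F (Fin.cons p.1 p.2) := by
    refine hF.comp ?_
    rw [measurable_pi_iff]
    intro i
    refine Fin.cases ?_ (fun j => ?_) i
    · exact measurable_fst
    · exact (measurable_pi_apply j).comp measurable_snd
  have hfInt : Integrable (fun p : ℝ × (Fin n → ℝ) => F (Fin.cons p.1 p.2))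
      (segMeasure.prod (cubeMeasure n)) :=
    Integrable.of_bound hG.aestronglyMeasurable 1 (Filter.Eventually.of_forall fun p => hb _)
  have h0 : ∫ x, F x ∂cubeMeasure (n + 1) =
      ∫ p, F (Fin.cons p.1 p.2) ∂(segMeasure.prod (cubeMeasure n)) := by
    rw [← hmp.integral_comp' (g := F)]
    refine integral_congr_ae (Filter.Eventually.of_forall fun p => ?_)
    simp [MeasurableEquiv.piFinSuccAbove, Fin.insertNthEquiv]
  refine ⟨h0.trans (integral_prod _ hfInt), h0.trans (integral_prod_symm _ hfInt), ?_⟩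
  have h1 : StronglyMeasurable
      (Function.uncurry fun (z : Fin n → ℝ) (y : ℝ) => F (Fin.cons y z)) :=
    (hG.comp measurable_swap).stronglyMeasurable
  exact (h1.integral_prod_right (ν := segMeasure)).measurable

/-! ### Coefficients and slices of polynomials on the cube -/

/-- `f` has total degree at most `D`, individual degrees at most `m`, and some coefficient of
degree exactly `D` of absolute value at least `A`. -/
structure Adm (D m : ℕ) (A : ℝ) {n : ℕ} (f : MvPolynomial (Fin n) ℝ) : Prop where
  deg : ∀ u, f.coeff u ≠ 0 → ∑ i, u i ≤ D
  ind : ∀ u, f.coeff u ≠ 0 → ∀ i, u i ≤ m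
  lead : ∃ j : Fin n →₀ ℕ, ∑ i, j i = D ∧ A ≤ |f.coeff j|

/-- Individual degrees never exceed the total degree. -/
lemma Adm.min {D m n : ℕ} {A : ℝ} {f : MvPolynomial (Fin n) ℝ} (h : Adm D m A f) :
    Adm D (min m D) A f :=
  ⟨h.deg, fun u hu i => le_min (h.ind u hu i)
    ((Finset.single_le_sum (f := fun i => u i) (fun _ _ => Nat.zero_le _)
      (Finset.mem_univ i)).trans (h.deg u hu)), h.lead⟩

open Polynomial in
/-- The one-variable polynomial `y ↦ f (y, z)`. -/
def fiber {n : ℕ} (f : MvPolynomial (Fin (n + 1)) ℝ) (z : Fin n → ℝ) : ℝ[X] :=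
  (MvPolynomial.finSuccEquiv ℝ n f).map (MvPolynomial.eval z)

lemma fiber_eval {n : ℕ} (f : MvPolynomial (Fin (n + 1)) ℝ) (y : ℝ) (z : Fin n → ℝ) :
    (fiber f z).eval y = MvPolynomial.eval (Fin.cons y z) f :=
  (MvPolynomial.eval_eq_eval_mv_eval' z y f).symm

lemma fiber_coeff {n : ℕ} (f : MvPolynomial (Fin (n + 1)) ℝ) (z : Fin n → ℝ) (i : ℕ) :
    (fiber f z).coeff i = MvPolynomial.eval z ((MvPolynomial.finSuccEquiv ℝ n f).coeff i) :=
  Polynomial.coeff_map _ _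

lemma fiber_natDegree {n D m : ℕ} {A : ℝ} {f : MvPolynomial (Fin (n + 1)) ℝ} (h : Adm D m A f)
    (z : Fin n → ℝ) : (fiber f z).natDegree ≤ m := by
  rw [Polynomial.natDegree_le_iff_coeff_eq_zero]
  intro i hi
  rw [fiber_coeff]
  have : (MvPolynomial.finSuccEquiv ℝ n f).coeff i = 0 := by
    ext u
    rw [MvPolynomial.finSuccEquiv_coeff_coeff, MvPolynomial.coeff_zero]
    by_contra hne
    have := h.ind _ hne 0
    rw [Finsupp.cons_zero] at this
    omega
  rw [this, map_zero]

/-- The coefficient of `x₀ ^ j₀` is again admissible, with degree lowered by `j₀`. -/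
lemma Adm.coeff {n D m : ℕ} {A : ℝ} {f : MvPolynomial (Fin (n + 1)) ℝ} (h : Adm D m A f)
    (j : Fin (n + 1) →₀ ℕ) (hj : ∑ i, j i = D) (hA : A ≤ |f.coeff j|) :
    Adm (D - j 0) m A ((MvPolynomial.finSuccEquiv ℝ n f).coeff (j 0)) := by
  refine ⟨fun u hu => ?_, fun u hu i => ?_, j.tail, ?_, ?_⟩
  · rw [MvPolynomial.finSuccEquiv_coeff_coeff] at hu
    have := h.deg _ hu
    rw [Fin.sum_univ_succ] at this
    simp only [Finsupp.cons_zero, Finsupp.cons_succ] at this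
    omega
  · rw [MvPolynomial.finSuccEquiv_coeff_coeff] at hu
    have := h.ind _ hu i.succ
    rwa [Finsupp.cons_succ] at this
  · rw [Fin.sum_univ_succ] at hj
    simp only [Finsupp.tail_apply]
    omega
  · rw [MvPolynomial.finSuccEquiv_coeff_coeff, Finsupp.cons_tail]
    exact hA

/-- Freezing `x₀` preserves admissibility when the leading monomial does not involve `x₀`: a
monomial that meets it after freezing has to have degree at most `D`, hence no factor `x₀`. -/
lemma Adm.slice {n D m : ℕ} {A : ℝ} {f : MvPolynomial (Fin (n + 1)) ℝ} (h : Adm D m A f)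
    (j : Fin (n + 1) →₀ ℕ) (hj : ∑ i, j i = D) (hA : A ≤ |f.coeff j|) (hj0 : j 0 = 0) (y : ℝ) :
    Adm D m A ((MvPolynomial.finSuccEquiv ℝ n f).eval (MvPolynomial.C y)) := by
  have hco : ∀ u, ((MvPolynomial.finSuccEquiv ℝ n f).eval (MvPolynomial.C y)).coeff u =
      ∑ i ∈ Finset.range ((MvPolynomial.finSuccEquiv ℝ n f).natDegree + 1),
        f.coeff (Finsupp.cons i u) * y ^ i := by
    intro u
    rw [Polynomial.eval_eq_sum_range, MvPolynomial.coeff_sum]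
    refine Finset.sum_congr rfl fun i _ => ?_
    rw [← map_pow, mul_comm, MvPolynomial.coeff_C_mul, MvPolynomial.finSuccEquiv_coeff_coeff,
      mul_comm]
  have hex : ∀ u, ((MvPolynomial.finSuccEquiv ℝ n f).eval (MvPolynomial.C y)).coeff u ≠ 0 →
      ∃ i, f.coeff (Finsupp.cons i u) ≠ 0 := by
    intro u hu
    by_contra! hcon
    exact hu (by rw [hco]; exact Finset.sum_eq_zero fun i _ => by rw [hcon, zero_mul])
  refine ⟨fun u hu => ?_, fun u hu i => ?_, j.tail, ?_, ?_⟩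
  · obtain ⟨i, hi⟩ := hex u hu
    have := h.deg _ hi
    rw [Fin.sum_univ_succ] at this
    simp only [Finsupp.cons_succ] at this
    omega
  · obtain ⟨k, hk⟩ := hex u hu
    have := h.ind _ hk i.succ
    rwa [Finsupp.cons_succ] at this
  · rw [Fin.sum_univ_succ] at hj
    simp only [Finsupp.tail_apply]
    omega
  · rw [hco, Finset.sum_eq_single_of_mem 0 (by simp)]
    · rw [← hj0, Finsupp.cons_tail, hj0, pow_zero, mul_one]; exact hA
    · intro i _ hi
      have : f.coeff (Finsupp.cons i j.tail) = 0 := by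
        by_contra hne
        have := h.deg _ hne
        rw [Fin.sum_univ_succ] at this hj
        simp only [Finsupp.cons_zero, Finsupp.cons_succ, Finsupp.tail_apply] at this
        omega
      rw [this, zero_mul]

lemma slice_eval {n : ℕ} (f : MvPolynomial (Fin (n + 1)) ℝ) (y : ℝ) (z : Fin n → ℝ) :
    MvPolynomial.eval z ((MvPolynomial.finSuccEquiv ℝ n f).eval (MvPolynomial.C y)) =
      MvPolynomial.eval (Fin.cons y z) f := by
  rw [← fiber_eval, fiber, ← Polynomial.eval₂_eq_eval_map]
  conv_lhs => rw [← Polynomial.eval₂_id, Polynomial.hom_eval₂]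
  simp

lemma measurable_eval {n : ℕ} (f : MvPolynomial (Fin n) ℝ) :
    Measurable fun x => MvPolynomial.eval x f :=
  (MvPolynomial.continuous_eval f).measurable

/-! ### Layer-cake estimates -/

lemma integral_le_one {Ω : Type*} [MeasurableSpace Ω] (μ : Measure Ω) [IsProbabilityMeasure μ]
    (k : Ω → ℝ) (hk : ∀ x, |k x| ≤ 1) : ∫ x, k x ∂μ ≤ 1 := by
  have := norm_integral_le_of_norm_le_const (μ := μ) (f := k) (C := 1) (Filter.Eventually.of_forall hk)
  simp at this
  exact (le_abs_self _).trans this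

/-- Layer-cake bound for the integral of a function `k ≤ 1`. -/
lemma integral_le_layer {Ω : Type*} [MeasurableSpace Ω] (μ : Measure Ω) [IsProbabilityMeasure μ]
    (k : Ω → ℝ) (hkm : Measurable k) (hk : ∀ x, |k x| ≤ 1) (a : ℝ) (ha : 0 < a) (ha1 : a ≤ 1)
    (G : ℝ → ℝ) (hGi : IntervalIntegrable G volume a 1)
    (hG : ∀ l ∈ Set.Ioc a 1, μ.real {x | l < k x} ≤ G l) :
    ∫ x, k x ∂μ ≤ a + ∫ l in a..1, G l := by
  have hfInt : Integrable k μ :=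
    Integrable.of_bound hkm.aestronglyMeasurable 1 (Filter.Eventually.of_forall hk)
  have hfInt' : Integrable (fun x => max (k x) 0) μ := hfInt.pos_part
  have h1 : ∫ x, k x ∂μ ≤ ∫ x, max (k x) 0 ∂μ :=
    integral_mono hfInt hfInt' fun x => le_max_left _ _
  have h2 := hfInt'.integral_eq_integral_meas_lt
    (Filter.Eventually.of_forall fun x => le_max_right _ _)
  have hGi' : IntegrableOn G (Set.Ioc a 1) :=
    (intervalIntegrable_iff_integrableOn_Ioc_of_le ha1).mp hGi
  set H : ℝ → ℝ := (Set.Ioc 0 a).indicator (fun _ => 1) + (Set.Ioc a 1).indicator G with hH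
  have i1 : Integrable ((Set.Ioc 0 a).indicator fun _ => (1 : ℝ)) (volume.restrict (Set.Ioi 0)) := by
    refine (IntegrableOn.integrable_indicator ?_ measurableSet_Ioc).restrict
    exact integrable_const _
  have i2 : Integrable ((Set.Ioc a 1).indicator G) (volume.restrict (Set.Ioi 0)) :=
    (hGi'.integrable_indicator measurableSet_Ioc).restrict
  have h3 : ∫ l in Set.Ioi (0 : ℝ), μ.real {x | l < max (k x) 0} ≤
      ∫ l in Set.Ioi (0 : ℝ), H l := by
    refine integral_mono_of_nonneg (Filter.Eventually.of_forall fun l => measureReal_nonneg)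
      (i1.add i2) ?_
    refine (ae_restrict_iff' measurableSet_Ioi).mpr (Filter.Eventually.of_forall fun l hl => ?_)
    have hl0 : 0 < l := hl
    have hset : {x | l < max (k x) 0} = {x | l < k x} := by
      ext x; simp only [Set.mem_ofPred_eq, lt_max_iff]
      exact ⟨fun h => h.resolve_right (by linarith), Or.inl⟩
    simp only [hset, hH, Pi.add_apply]
    rcases le_or_gt l a with hla | hla
    · rw [Set.indicator_of_mem (show l ∈ Set.Ioc 0 a from ⟨hl0, hla⟩),
        Set.indicator_of_notMem (fun h => by linarith [h.1]), add_zero]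
      exact measureReal_le_one
    rw [Set.indicator_of_notMem (fun h => by linarith [h.2]), zero_add]
    rcases le_or_gt l 1 with hl1 | hl1
    · rw [Set.indicator_of_mem (show l ∈ Set.Ioc a 1 from ⟨hla, hl1⟩)]
      exact hG l ⟨hla, hl1⟩
    · rw [Set.indicator_of_notMem (fun h => by linarith [h.2])]
      have : {x | l < k x} = ∅ := by
        ext x
        simp only [Set.mem_ofPred_eq, Set.mem_empty_iff_false, iff_false, not_lt]
        exact ((le_abs_self _).trans (hk x)).trans hl1.le
      rw [this]; simp
  have h4 : ∫ l in Set.Ioi (0 : ℝ), H l = a + ∫ l in a..1, G l := by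
    rw [hH]
    simp only [Pi.add_apply]
    rw [integral_add i1 i2, setIntegral_indicator measurableSet_Ioc,
      setIntegral_indicator measurableSet_Ioc, intervalIntegral.integral_of_le ha1,
      Set.inter_eq_right.mpr Set.Ioc_subset_Ioi_self,
      Set.inter_eq_right.mpr (Set.Ioc_subset_Ioi_self.trans (Set.Ioi_subset_Ioi ha.le))]
    simp [ha.le]
  linarith

/-! ### Integration of the one-variable decay -/

/-- The rate function `r ^ (1 / m) * (|log r| ^ (D - m) + 1)`. -/
def rate (D m : ℕ) (r : ℝ) : ℝ := r ^ (1 / (m : ℝ)) * (|Real.log r| ^ (D - m) + 1)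

lemma rate_nonneg (D m : ℕ) {r : ℝ} (hr : 0 ≤ r) : 0 ≤ rate D m r := by
  unfold rate; positivity

lemma rpow_le_rate (D m : ℕ) {r : ℝ} (hr : 0 ≤ r) : r ^ (1 / (m : ℝ)) ≤ rate D m r := by
  unfold rate
  have h1 : 0 ≤ r ^ (1 / (m : ℝ)) := by positivity
  have h2 : 0 ≤ |Real.log r| ^ (D - m) := by positivity
  nlinarith

lemma one_le_rate (D m : ℕ) {r : ℝ} (hr : 1 ≤ r) : 1 ≤ rate D m r :=
  (Real.one_le_rpow hr (by positivity)).trans (rpow_le_rate D m (by linarith))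

lemma pow_le_pow_add_one {L : ℝ} (hL : 0 ≤ L) {i j : ℕ} (hij : i ≤ j) : L ^ i ≤ L ^ j + 1 := by
  rcases le_total L 1 with h | h
  · have := pow_le_one₀ (n := i) hL h
    have : 0 ≤ L ^ j := by positivity
    linarith
  · have := pow_le_pow_right₀ h hij
    linarith

/-- Integrating the one-variable decay `(t / |g|) ^ (1 / m)` against the sublevel estimate of `g`.
A logarithm is gained if `g` has degree `D' ≥ m`; for `D' < m` the sublevel estimate is strong
enough for the integral to converge without one. -/
lemma step_integral (D D' m : ℕ) (hm : 0 < m) (hmD : m ≤ D) (hD' : 0 < D') (hDD : D' < D)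
    (C' : ℝ) (hC' : 0 < C') {Ω : Type*} [MeasurableSpace Ω] (μ : Measure Ω)
    [IsProbabilityMeasure μ] (k : Ω → ℝ) (hkm : Measurable k) (hk : ∀ x, |k x| ≤ 1) (g : Ω → ℝ)
    (A t : ℝ) (hA : 0 < A) (ht : 0 < t) (hr1 : t / A < 1)
    (hsub : ∀ s, 0 < s → μ.real {x | |g x| ≤ s} ≤ C' * rate D' (min m D') (s / A))
    (hkg : ∀ x b, 0 < b → b ≤ |g x| → k x ≤ (t / b) ^ (1 / (m : ℝ))) :
    ∫ x, k x ∂μ ≤ (1 + 2 * C' * D) * rate D m (t / A) := by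
  set r := t / A with hr
  have hr0 : 0 < r := by positivity
  have hm' : (0 : ℝ) < m := by exact_mod_cast hm
  set a := r ^ (1 / (m : ℝ)) with ha
  have ha0 : 0 < a := by positivity
  have ha1 : a ≤ 1 := Real.rpow_le_one hr0.le hr1.le (by positivity)
  have ham : a ^ m = r := by
    rw [ha, one_div]; exact Real.rpow_inv_natCast_pow hr0.le hm.ne'
  have hlev : ∀ l ∈ Set.Ioc a 1, μ.real {x | l < k x} ≤ C' * rate D' (min m D') ((a / l) ^ m) := by
    intro l hl
    have hl0 : 0 < l := ha0.trans hl.1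
    have hs : 0 < t / l ^ m := by positivity
    have h1 : {x | l < k x} ⊆ {x | |g x| ≤ t / l ^ m} := by
      intro x hx
      by_contra hcon
      -- At the threshold `b = t / l ^ m` the decay hypothesis gives exactly `k x ≤ l`.
      have hgx : t / l ^ m ≤ |g x| := (not_le.mp hcon).le
      have := hkg x _ hs hgx
      have h2 : t / (t / l ^ m) = l ^ m := by field_simp
      rw [h2, one_div, Real.pow_rpow_inv_natCast hl0.le hm.ne'] at this
      exact absurd hx (not_lt.mpr this)
    have h3 : t / l ^ m / A = (a / l) ^ m := by rw [div_pow, ham, hr]; ring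
    rw [← h3]
    exact (measureReal_mono h1).trans (hsub _ hs)
  have hrate : rate D m r = a * (|Real.log r| ^ (D - m) + 1) := rfl
  set L := |Real.log r| with hL
  have hL0 : 0 ≤ L := abs_nonneg _
  have hD1 : (1 : ℝ) ≤ D := by exact_mod_cast (by omega : 1 ≤ D)
  rcases le_or_gt m D' with hmD' | hmD'
  · rw [min_eq_left hmD'] at hlev
    have hInt : IntervalIntegrable (fun l : ℝ => C' * (a * (L ^ (D' - m) + 1)) * l⁻¹) volume a 1 := by
      refine ContinuousOn.intervalIntegrable ?_
      refine continuousOn_const.mul (continuousOn_id.inv₀ fun x hx => ?_)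
      rw [Set.uIcc_of_le ha1] at hx
      exact (ha0.trans_le hx.1).ne'
    have := integral_le_layer μ k hkm hk a ha0 ha1 _ hInt ?_
    · rw [intervalIntegral.integral_const_mul, integral_inv_of_pos ha0 one_pos] at this
      have hlog : Real.log (1 / a) ≤ L := by
        rw [one_div, Real.log_inv, ha, Real.log_rpow hr0, hL, abs_of_neg (Real.log_neg hr0 hr1)]
        have h1 : Real.log r < 0 := Real.log_neg hr0 hr1
        have h2 : 1 / (m : ℝ) ≤ 1 := by
          rw [div_le_one hm']; exact_mod_cast hm
        nlinarith
      have hpow : (L ^ (D' - m) + 1) * L ≤ 2 * (L ^ (D - m) + 1) := by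
        have h1 : L ^ (D' - m + 1) ≤ L ^ (D - m) + 1 := pow_le_pow_add_one hL0 (by omega)
        have h2 : L ^ 1 ≤ L ^ (D - m) + 1 := pow_le_pow_add_one hL0 (by omega)
        rw [pow_succ] at h1; rw [pow_one] at h2
        linarith
      calc _ ≤ a + C' * (a * (L ^ (D' - m) + 1)) * Real.log (1 / a) := this
        _ ≤ a + C' * (a * (L ^ (D' - m) + 1)) * L := by gcongr
        _ = a + C' * a * ((L ^ (D' - m) + 1) * L) := by ring
        _ ≤ a + C' * a * (2 * (L ^ (D - m) + 1)) := by gcongr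
        _ = a + 2 * C' * 1 * (a * (L ^ (D - m) + 1)) := by ring
        _ ≤ rate D m r + 2 * C' * D * (a * (L ^ (D - m) + 1)) := by
            gcongr; exact rpow_le_rate D m hr0.le
        _ = _ := by rw [hrate]; ring
    · intro l hl
      have hl0 : 0 < l := ha0.trans hl.1
      have hal : 0 < a / l := by positivity
      refine (hlev l hl).trans ?_
      have h1 : |Real.log ((a / l) ^ m)| ≤ L := by
        have hle : (a / l) ^ m ≤ 1 := pow_le_one₀ hal.le ((div_le_one hl0).mpr hl.1.le)
        have hge : r ≤ (a / l) ^ m := by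
          rw [div_pow, ham, le_div_iff₀ (by positivity)]
          have : l ^ m ≤ 1 := pow_le_one₀ hl0.le hl.2
          nlinarith
        rw [hL, abs_of_nonpos (Real.log_nonpos (by positivity) hle),
          abs_of_neg (Real.log_neg hr0 hr1)]
        have := Real.log_le_log hr0 hge
        linarith
      unfold rate
      rw [one_div, Real.pow_rpow_inv_natCast hal.le hm.ne']
      calc C' * (a / l * (|Real.log ((a / l) ^ m)| ^ (D' - m) + 1)) ≤
            C' * (a / l * (L ^ (D' - m) + 1)) := by gcongr
        _ = _ := by ring
  · rw [min_eq_right hmD'.le] at hlev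
    have hDr : (0 : ℝ) < D' := by exact_mod_cast hD'
    set q : ℝ := m / D' with hq
    have hq1 : 1 ≤ (q - 1) * D' := by
      have h1 : (D' : ℝ) + 1 ≤ m := by exact_mod_cast hmD'
      rw [hq, sub_mul, div_mul_cancel₀ _ hDr.ne']; linarith
    have hq2 : 0 < q - 1 := by
      by_contra h
      nlinarith [not_lt.mp h]
    have hInt : IntervalIntegrable (fun l : ℝ => 2 * C' * a ^ q * l ^ (-q)) volume a 1 := by
      refine ContinuousOn.intervalIntegrable ?_
      refine continuousOn_const.mul (continuousOn_id.rpow_const fun x hx => Or.inl ?_)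
      rw [Set.uIcc_of_le ha1] at hx
      exact (ha0.trans_le hx.1).ne'
    have := integral_le_layer μ k hkm hk a ha0 ha1 _ hInt ?_
    · rw [intervalIntegral.integral_const_mul, integral_rpow (Or.inr ⟨by linarith, by
        rw [Set.uIcc_of_le ha1]; exact fun h => absurd h.1 (not_le.mpr ha0)⟩), Real.one_rpow] at this
      have haa : a ^ q * a ^ (-q + 1) = a := by
        rw [← Real.rpow_add ha0]; simp
      have haq : 0 < a ^ q := by positivity
      have h5 : a ^ q * ((1 - a ^ (-q + 1)) / (-q + 1)) ≤ a * D' := by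
        have : a ^ q * ((1 - a ^ (-q + 1)) / (-q + 1)) = (a - a ^ q) / (q - 1) := by
          have h6 : (1 - a ^ (-q + 1)) / (-q + 1) = (a ^ (-q + 1) - 1) / (q - 1) := by
            rw [← neg_div_neg_eq]; congr 1 <;> ring
          rw [h6, ← mul_div_assoc, mul_sub, haa, mul_one]
        rw [this, div_le_iff₀ hq2]
        nlinarith
      have hDD' : (D' : ℝ) ≤ D := by exact_mod_cast hDD.le
      have h0 : a ≤ rate D m r := rpow_le_rate D m hr0.le
      have hrn : 0 ≤ rate D m r := ha0.le.trans h0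
      calc _ ≤ a + 2 * C' * a ^ q * ((1 - a ^ (-q + 1)) / (-q + 1)) := this
        _ = a + 2 * C' * (a ^ q * ((1 - a ^ (-q + 1)) / (-q + 1))) := by ring
        _ ≤ a + 2 * C' * (a * D') := by gcongr
        _ ≤ rate D m r + 2 * C' * (rate D m r * D) := by gcongr
        _ = _ := by ring
    · intro l hl
      have hl0 : 0 < l := ha0.trans hl.1
      have hal : 0 < a / l := by positivity
      refine (hlev l hl).trans (le_of_eq ?_)
      unfold rate
      rw [Nat.sub_self, pow_zero, ← Real.rpow_natCast (a / l) m, ← Real.rpow_mul hal.le,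
        mul_one_div, ← hq, Real.div_rpow ha0.le hl0.le, Real.rpow_neg hl0.le]
      ring

/-! ### Induction on the degree -/

/-- The constant in the one-variable estimates. -/
def oneDimConst (m : ℕ) : ℝ := 16 * m + 4 * (3 * m + 1)

lemma one_le_oneDimConst (m : ℕ) : 1 ≤ oneDimConst m := by
  unfold oneDimConst
  have : (0 : ℝ) ≤ m := m.cast_nonneg
  linarith

/-- The bound of the theorem for admissible polynomials of degree exactly `D`. -/
def CubeBound (D m : ℕ) (C : ℝ) : Prop :=
  ∀ (n : ℕ) (f : MvPolynomial (Fin n) ℝ) (A t : ℝ) (w : ℝ → ℝ), 0 < A → 0 < t → Adm D m A f →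
    Good m (oneDimConst m) t w →
      ∫ x, w (MvPolynomial.eval x f) ∂cubeMeasure n ≤ C * rate D m (t / A)

/-- The bound applied to the indicator of `[-s, s]`, which is a good test function at scale `s`. -/
lemma CubeBound.sublevel {D m : ℕ} {C : ℝ} (hm : 0 < m) (h : CubeBound D m C) {n : ℕ}
    {f : MvPolynomial (Fin n) ℝ} {A s : ℝ} (hA : 0 < A) (hs : 0 < s) (hf : Adm D m A f) :
    (cubeMeasure n).real {x | |MvPolynomial.eval x f| ≤ s} ≤ C * rate D m (s / A) := by
  have hgood : Good m (oneDimConst m) s ({y | |y| ≤ s}.indicator fun _ => 1) :=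
    (good_indicator m hm s hs).mono hs (by unfold oneDimConst; linarith [m.cast_nonneg (α := ℝ)])
  refine le_trans (le_of_eq ?_) (h n f A s _ hA hs hf hgood)
  have hms : MeasurableSet {x | |MvPolynomial.eval x f| ≤ s} :=
    (isClosed_le (MvPolynomial.continuous_eval f).abs continuous_const).measurableSet
  have : ∀ x, ({y : ℝ | |y| ≤ s}.indicator (fun _ => (1 : ℝ))) (MvPolynomial.eval x f) =
      {x | |MvPolynomial.eval x f| ≤ s}.indicator (fun _ => (1 : ℝ)) x := fun x => rfl
  simp_rw [this]
  rw [integral_indicator_const _ hms, smul_eq_mul, mul_one]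

/-- Averaging a one-variable bound governed by an admissible coefficient of lower degree `D'`. -/
lemma coefficient_average (D D' m : ℕ) (hm : 0 < m) (hmD : m ≤ D) (hDD : D' < D)
    (ih : ∀ m', 0 < m' → m' ≤ D' → ∃ C, 0 < C ∧ CubeBound D' m' C) :
    ∃ C : ℝ, 0 < C ∧ ∀ (n : ℕ) (g : MvPolynomial (Fin n) ℝ) (A t : ℝ) (k : (Fin n → ℝ) → ℝ),
      0 < A → 0 < t → Adm D' m A g → Measurable k → (∀ x, |k x| ≤ 1) →
      (∀ x b, 0 < b → b ≤ |MvPolynomial.eval x g| →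
        k x ≤ oneDimConst m * (t / b) ^ (1 / (m : ℝ))) →
      ∫ x, k x ∂cubeMeasure n ≤ C * rate D m (t / A) := by
  set K := oneDimConst m with hKdef
  have hK : 1 ≤ K := one_le_oneDimConst m
  have hK0 : 0 < K := by linarith
  rcases Nat.eq_zero_or_pos D' with h0 | hD'
  · subst h0
    refine ⟨K, hK0, fun n g A t k hA ht hg hkm hk hkg => ?_⟩
    have hu0 : ∀ u : Fin n →₀ ℕ, ∑ i, u i ≤ 0 → u = 0 := by
      intro u hu
      ext i
      have := Finset.single_le_sum (f := fun i => u i) (fun _ _ => Nat.zero_le _) (Finset.mem_univ i)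
      simp only [Finsupp.coe_zero, Pi.zero_apply]
      omega
    have hgC : g = MvPolynomial.C (g.coeff 0) := by
      ext u
      rw [MvPolynomial.coeff_C]
      split_ifs with h
      · rw [h]
      · by_contra hne
        exact h (hu0 u (hg.deg u hne)).symm
    have hA0 : A ≤ |g.coeff 0| := by
      obtain ⟨j, hj, hAj⟩ := hg.lead
      rwa [hu0 j hj.le] at hAj
    have hkc : ∀ x, k x ≤ K * (t / A) ^ (1 / (m : ℝ)) := by
      intro x
      refine hkg x A hA ?_
      rw [hgC, MvPolynomial.eval_C]; exact hA0
    have hfInt : Integrable k (cubeMeasure n) :=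
      Integrable.of_bound hkm.aestronglyMeasurable 1 (Filter.Eventually.of_forall hk)
    calc ∫ x, k x ∂cubeMeasure n ≤ ∫ _, K * (t / A) ^ (1 / (m : ℝ)) ∂cubeMeasure n :=
          integral_mono hfInt (integrable_const _) hkc
      _ = K * (t / A) ^ (1 / (m : ℝ)) := by simp
      _ ≤ _ := by gcongr; exact rpow_le_rate D m (by positivity)
  · obtain ⟨C', hC', hCB⟩ := ih (min m D') (lt_min hm hD') (min_le_right _ _)
    have hD0 : (0 : ℝ) ≤ D := D.cast_nonneg
    have hKC : 1 ≤ K * (1 + 2 * C' * D) := by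
      have : 0 ≤ 2 * C' * D := by positivity
      nlinarith
    refine ⟨K * (1 + 2 * C' * D), by linarith, fun n g A t k hA ht hg hkm hk hkg => ?_⟩
    have hr0 : 0 ≤ rate D m (t / A) := rate_nonneg D m (by positivity)
    rcases le_or_gt 1 (t / A) with hr | hr
    · have h1 := one_le_rate D m hr
      have h2 := integral_le_one (cubeMeasure n) k hk
      nlinarith
    have := step_integral D D' m hm hmD hD' hDD C' hC' (cubeMeasure n) (fun x => k x / K)
      (hkm.div_const K) (fun x => by
        rw [abs_div, abs_of_pos hK0, div_le_one hK0]; exact (hk x).trans hK)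
      (fun x => MvPolynomial.eval x g) A t hA ht hr
      (fun s hs => hCB.sublevel (lt_min hm hD') hA hs hg.min)
      (fun x b hb hbg => by
        rw [div_le_iff₀ hK0, mul_comm]; exact hkg x b hb hbg)
    rw [integral_div, div_le_iff₀ hK0] at this
    linarith

/-- Induction on the degree: the coefficient of a power of one variable of the leading monomial is
admissible of smaller degree. -/
theorem cubeBound_exists (D : ℕ) : ∀ m, 0 < m → m ≤ D → ∃ C, 0 < C ∧ CubeBound D m C := by
  induction D using Nat.strong_induction_on with
  | _ D ih =>
  intro m hm hmD
  choose! Cs hCs0 hCs using fun D' (hD' : D' < D) =>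
    coefficient_average D D' m hm hmD hD' (fun m' h1 h2 => ih D' hD' m' h1 h2)
  have hle : ∀ D' < D, Cs D' ≤ ∑ i ∈ Finset.range D, Cs i := fun D' hD' =>
    Finset.single_le_sum (fun i hi => (hCs0 i (Finset.mem_range.mp hi)).le)
      (Finset.mem_range.mpr hD')
  refine ⟨∑ i ∈ Finset.range D, Cs i, (hCs0 0 (by omega)).trans_le (hle 0 (by omega)), ?_⟩
  intro n
  induction n with
  | zero =>
    intro f A t w _ _ hf _
    obtain ⟨j, hj, _⟩ := hf.lead
    simp at hj
    omega
  | succ n ihn =>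
    intro f A t w hA ht hf hw
    obtain ⟨j, hj, hAj⟩ := hf.lead
    have hr0 : 0 ≤ rate D m (t / A) := rate_nonneg D m (by positivity)
    obtain ⟨F1, F2, F3⟩ := cube_fubini n (fun x => w (MvPolynomial.eval x f))
      (hw.meas.comp (measurable_eval f)) (fun x => hw.bound _)
    -- If the leading monomial omits `x₀`, freeze `x₀`; otherwise integrate in `x₀` first.
    rcases Nat.eq_zero_or_pos (j 0) with hj0 | hj0
    · rw [F1]
      set B := (∑ i ∈ Finset.range D, Cs i) * rate D m (t / A) with hB
      have hin : ∀ y : ℝ, ∫ z, w (MvPolynomial.eval (Fin.cons y z) f) ∂cubeMeasure n ≤ B := by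
        intro y
        simp_rw [← slice_eval]
        exact ihn _ A t w hA ht (hf.slice j hj hAj hj0 y) hw
      have hB0 : 0 ≤ B := mul_nonneg (Finset.sum_nonneg fun i hi =>
        (hCs0 i (Finset.mem_range.mp hi)).le) hr0
      by_cases hi : Integrable
          (fun y => ∫ z, w (MvPolynomial.eval (Fin.cons y z) f) ∂cubeMeasure n) segMeasure
      · exact (integral_mono hi (integrable_const B) hin).trans (by simp)
      -- The inner average is in fact integrable; the junk value `0` also satisfies the bound.
      · rw [integral_undef hi]; exact hB0
    · rw [F2]
      have hjD : j 0 ≤ D := by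
        rw [← hj]
        exact Finset.single_le_sum (f := fun i => j i) (fun _ _ => Nat.zero_le _)
          (Finset.mem_univ 0)
      refine (hCs (D - j 0) (by omega) n _ A t _ hA ht (hf.coeff j hj hAj) F3 ?_ ?_).trans
        (mul_le_mul_of_nonneg_right (hle _ (by omega)) hr0)
      · intro z
        have := norm_integral_le_of_norm_le_const (μ := segMeasure)
          (f := fun y => w (MvPolynomial.eval (Fin.cons y z) f)) (C := 1)
          (Filter.Eventually.of_forall fun y => hw.bound _)
        simpa using this
      · intro z b hb hbz
        simp_rw [← fiber_eval]
        exact hw.decay _ (fiber_natDegree hf z) (j 0) hj0 b hb (by rwa [fiber_coeff])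

/-! ### The modulus of the image measure -/

/-- The rate at the actual degree `D` of `f` is at most twice the rate at the bound `d`; for `D < m` the
former has the better exponent `1 / D` and no logarithm. -/
lemma rate_comparison (D d m : ℕ) (hD : 0 < D) (hDd : D ≤ d) (hm : 0 < m) {r : ℝ}
    (hr0 : 0 < r) (hr1 : r < 1) : rate D (min m D) r ≤ 2 * rate d m r := by
  unfold rate
  set L := |Real.log r|
  have hL : 0 ≤ L := abs_nonneg _
  have hpow : r ^ (1 / ((min m D : ℕ) : ℝ)) ≤ r ^ (1 / (m : ℝ)) := by
    refine Real.rpow_le_rpow_of_exponent_ge hr0 hr1.le ?_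
    have h1 : (0 : ℝ) < (min m D : ℕ) := by exact_mod_cast lt_min hm hD
    have h2 : ((min m D : ℕ) : ℝ) ≤ m := by exact_mod_cast min_le_left _ _
    exact one_div_le_one_div_of_le h1 h2
  have hlog : L ^ (D - min m D) + 1 ≤ 2 * (L ^ (d - m) + 1) := by
    have := pow_le_pow_add_one hL (i := D - min m D) (j := d - m) (by omega)
    have : 0 ≤ L ^ (d - m) := by positivity
    linarith
  calc _ ≤ r ^ (1 / (m : ℝ)) * (2 * (L ^ (d - m) + 1)) := by gcongr
    _ = _ := by ring

/-- For a non-constant polynomial, `[f]_∞` is positive and attained at a top-degree monomial. -/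
lemma leadingSup_adm {n : ℕ} (f : MvPolynomial (Fin n) ℝ) (m : ℕ)
    (hind : ∀ u ∈ f.support, ∀ i, u i ≤ m)
    (hnc : ¬ ∃ c : ℝ, ∀ x : Fin n → ℝ, MvPolynomial.eval x f = c) :
    0 < f.totalDegree ∧ 0 < leadingSup f ∧ Adm f.totalDegree m (leadingSup f) f := by
  have hsum : ∀ u : Fin n →₀ ℕ, (u.sum fun _ e => e) = ∑ i, u i := fun u =>
    Finsupp.sum_fintype _ _ (by simp)
  have hdeg : 0 < f.totalDegree := by
    rw [Nat.pos_iff_ne_zero]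
    intro h0
    rw [MvPolynomial.totalDegree_eq_zero_iff_eq_C] at h0
    exact hnc ⟨f.coeff 0, fun x => by rw [h0]; simp⟩
  have hf0 : f ≠ 0 := by rintro rfl; simp at hdeg
  set S := {y : ℝ | ∃ u ∈ f.support, (u.sum fun _ e => e) = f.totalDegree ∧ y = |f.coeff u|}
    with hS
  have hfin : S.Finite := by
    refine (f.support.finite_toSet.image fun u => |f.coeff u|).subset ?_
    rintro y ⟨u, hu, _, rfl⟩
    exact ⟨u, hu, rfl⟩
  have hne : S.Nonempty := by
    obtain ⟨u, hu, hu2⟩ := Finset.exists_mem_eq_sup f.support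
      (MvPolynomial.support_nonempty.mpr hf0) (fun s => s.sum fun _ e => e)
    exact ⟨_, u, hu, hu2.symm, rfl⟩
  obtain ⟨j, hj, hjd, hjA⟩ := hne.csSup_mem hfin
  have hA : leadingSup f = |f.coeff j| := hjA
  refine ⟨hdeg, ?_, ?_, ?_, j, ?_, hA.le⟩
  · rw [hA]; exact abs_pos.mpr (MvPolynomial.mem_support_iff.mp hj)
  · intro u hu
    rw [← hsum]
    exact MvPolynomial.le_totalDegree (MvPolynomial.mem_support_iff.mpr hu)
  · exact fun u hu => hind u (MvPolynomial.mem_support_iff.mpr hu)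
  · rw [← hsum]; exact hjd

/-- **Regularity on the cube for polynomials with bounded individual degree.**
For `d ≥ m` there exists a constant `C(m,d)` such that for every `n` and every
non-constant polynomial `f ∈ 𝒫_{d,m}(ℝⁿ)`,
`σ(μ_{Qⁿ}∘f⁻¹, t) ≤ C(m,d) [f]_∞^{-1/m} t^{1/m} (|ln([f]_∞⁻¹ t)|^{d-m} + 1)`
for all `t > 0`. -/
theorem cube_individual_degree (d m : ℕ) (hm : 0 < m) (hdm : m ≤ d) :
    ∃ C : ℝ, 0 < C ∧ ∀ (n : ℕ), 0 < n →
      ∀ f : MvPolynomial (Fin n) ℝ, f.totalDegree ≤ d →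
        (∀ u ∈ f.support, ∀ i, u i ≤ m) →
        (¬ ∃ c : ℝ, ∀ x : Fin n → ℝ, MvPolynomial.eval x f = c) →
      ∀ t : ℝ, 0 < t →
        sigmaMod (Measure.map (fun x => MvPolynomial.eval x f) (cubeMeasure n)) t ≤
          C * leadingSup f ^ (-(1 / (m : ℝ))) * t ^ (1 / (m : ℝ)) *
            (|Real.log ((leadingSup f)⁻¹ * t)| ^ (d - m) + 1) := by
  choose! Cs hCs0 hCs using fun D (hD : 0 < D) =>
    cubeBound_exists D (min m D) (lt_min hm hD) (min_le_right _ _)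
  have hle : ∀ D, 0 < D → D ≤ d → Cs D ≤ ∑ i ∈ Finset.Icc 1 d, Cs i := fun D h1 h2 =>
    Finset.single_le_sum (fun i hi => (hCs0 i (Finset.mem_Icc.mp hi).1).le)
      (Finset.mem_Icc.mpr ⟨h1, h2⟩)
  set C := ∑ i ∈ Finset.Icc 1 d, Cs i with hC
  have hC0 : 0 ≤ C := Finset.sum_nonneg fun i hi => (hCs0 i (Finset.mem_Icc.mp hi).1).le
  refine ⟨1 + 2 * C, by linarith, ?_⟩
  intro n _ f hfd hind hnc t ht
  obtain ⟨hD, hA, hadm⟩ := leadingSup_adm f m hind hnc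
  set A := leadingSup f with hAdef
  have hrhs : (1 + 2 * C) * A ^ (-(1 / (m : ℝ))) * t ^ (1 / (m : ℝ)) *
      (|Real.log (A⁻¹ * t)| ^ (d - m) + 1) = (1 + 2 * C) * rate d m (t / A) := by
    unfold rate
    rw [Real.div_rpow ht.le hA.le, Real.rpow_neg hA.le, inv_mul_eq_div]
    ring
  rw [hrhs]
  have hr0 : 0 < t / A := by positivity
  have hrate := rate_nonneg d m hr0.le
  refine Real.sSup_le ?_ (by positivity)
  rintro y ⟨φ, hφ, hφt, hφ1, rfl⟩
  have hφc : ContDiff ℝ 1 φ := hφ.1.of_le (by exact_mod_cast le_top)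
  have hcont : Continuous (deriv φ) := hφc.continuous_deriv (by norm_num)
  rw [integral_map (measurable_eval f).aemeasurable hcont.aestronglyMeasurable]
  rcases le_or_gt 1 (t / A) with hr | hr
  · have h1 := integral_le_one (cubeMeasure n) (fun x => deriv φ (MvPolynomial.eval x f))
      (fun x => hφ1 _)
    have h2 := one_le_rate d m hr
    nlinarith
  · have hm' : 0 < min m f.totalDegree := lt_min hm hD
    have hmain := hCs f.totalDegree hD n f A t (deriv φ) hA ht hadm.min
      (good_deriv _ hm' φ hφc t ht hφt hφ1)
    have hcmp := rate_comparison f.totalDegree d m hD hfd hm hr0 hr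
    calc _ ≤ Cs f.totalDegree * rate f.totalDegree (min m f.totalDegree) (t / A) := hmain
      _ ≤ C * (2 * rate d m (t / A)) :=
          mul_le_mul (hle _ hD hfd) hcmp (rate_nonneg _ _ hr0.le) hC0
      _ ≤ _ := by nlinarith
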